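/- arXiv:1405.4324 — 4 statements merged into one kernel-verified Lean document; each statement's English description precedes it below -/
import Mathlib

section
/- Let S ⊆ V and let ω_c(S) = inf{ω(φ) : φ ∈ L2(S^c), φ ≠ 0} (with ω_c(S) = +∞ if L2(S^c) = {0}). Then every signal f ∈ PW_ω(G) can be perfectly recovered from its samples on S — i.e., the restriction map f ↦ f(S) is injective on PW_ω(G) — if and only if ω < ω_c(S). -/
open Matrix

noncomputable section

/-- The bandwidth `ω(φ)` of a signal `φ`: the largest eigenvalue `lam i` such that the
component of `φ` along the eigenvector `u i` is nonzero. -/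
def bandwidth {N : ℕ} (lam : Fin N → ℝ) (u : Fin N → Fin N → ℝ) (φ : Fin N → ℝ) : ℝ :=
  sSup {r : ℝ | ∃ i, r = lam i ∧ φ ⬝ᵥ u i ≠ 0}

/-- The Paley–Wiener space `PW_ω(G)`: the span of the eigenvectors with eigenvalue at most `ω`. -/
def PW {N : ℕ} (lam : Fin N → ℝ) (u : Fin N → Fin N → ℝ) (ω : ℝ) :
    Submodule ℝ (Fin N → ℝ) :=
  Submodule.span ℝ (u '' {i | lam i ≤ ω})

/-- The cut-off frequency `ω_c(S)`: the infimum (in `EReal`, so `⊤` if the set is empty) of the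
bandwidths of nonzero signals vanishing on `S`. -/
def cutoffFreq {N : ℕ} (lam : Fin N → ℝ) (u : Fin N → Fin N → ℝ) (S : Set (Fin N)) : EReal :=
  sInf {r : EReal |
    ∃ φ : Fin N → ℝ, φ ≠ 0 ∧ (∀ i ∈ S, φ i = 0) ∧ r = ((bandwidth lam u φ : ℝ) : EReal)}

/-!
Sampling is linear, so it is injective on `PW_ω(G)` iff no nonzero signal of `PW_ω(G)` vanishes
on `S`. Expanding in the eigenbasis shows that a nonzero signal lies in `PW_ω(G)` iff its bandwidth
is at most `ω`; hence injectivity says that every nonzero signal vanishing on `S` has bandwidth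
greater than `ω`. Only finitely many bandwidths occur, so the infimum `ω_c(S)` is attained when
it is finite, and the strict inequality survives the passage to the infimum.
-/

section Orthonormal

variable {ι R : Type*} [Fintype ι] [DecidableEq ι] [Semiring R] [IsStablyFiniteRing R]
  {u : ι → ι → R}

lemma sum_dotProduct_smul_of_orthonormal
    (horth : ∀ i j, u i ⬝ᵥ u j = if i = j then (1 : R) else 0) (x : ι → R) :
    ∑ i, (x ⬝ᵥ u i) • u i = x := by
  have hrow : of u * (of u)ᵀ = 1 := by
    ext i j
    exact (horth i j).trans (one_apply ..).symm
  have hcol : (of u)ᵀ * of u = 1 := mul_eq_one_comm.mp hrow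
  calc ∑ i, (x ⬝ᵥ u i) • u i = (x ᵥ* (of u)ᵀ) ᵥ* of u := (vecMul_eq_sum _ _).symm
    _ = x := by rw [vecMul_vecMul, hcol, vecMul_one]

lemma exists_dotProduct_ne_zero_of_orthonormal
    (horth : ∀ i j, u i ⬝ᵥ u j = if i = j then (1 : R) else 0) {x : ι → R} (hx : x ≠ 0) :
    ∃ i, x ⬝ᵥ u i ≠ 0 := by
  contrapose! hx
  simpa [hx] using (sum_dotProduct_smul_of_orthonormal horth x).symm

lemma mem_span_image_iff_of_orthonormal
    (horth : ∀ i j, u i ⬝ᵥ u j = if i = j then (1 : R) else 0) {s : Set ι} {x : ι → R} :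
    x ∈ Submodule.span R (u '' s) ↔ ∀ i, x ⬝ᵥ u i ≠ 0 → i ∈ s := by
  constructor
  · intro hx i
    contrapose!
    intro hi
    induction hx using Submodule.span_induction with
    | mem y hy =>
      obtain ⟨j, hj, rfl⟩ := hy
      rw [horth, if_neg (ne_of_mem_of_not_mem hj hi)]
    | zero => exact zero_dotProduct _
    | add y z _ _ hy hz => rw [add_dotProduct, hy, hz, add_zero]
    | smul a y _ hy => rw [smul_dotProduct, hy, smul_zero]
  · intro h
    rw [← sum_dotProduct_smul_of_orthonormal horth x]
    refine Submodule.sum_mem _ fun i _ => ?_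
    by_cases hi : x ⬝ᵥ u i = 0
    · simp [hi]
    · exact Submodule.smul_mem _ _ (Submodule.subset_span ⟨i, h i hi, rfl⟩)

end Orthonormal

lemma lt_sInf_iff_of_finite {α : Type*} [CompleteLinearOrder α] {s : Set α} (hs : s.Finite)
    {a : α} (ha : a < ⊤) : a < sInf s ↔ ∀ b ∈ s, a < b := by
  rcases s.eq_empty_or_nonempty with rfl | hne
  · simpa using ha
  · exact hs.lt_csInf_iff hne

lemma forall_eq_of_eqOn_iff_forall_eq_zero {ι R M : Type*} [Ring R] [AddCommGroup M]
    [Module R M] (K : Submodule R (ι → M)) (S : Set ι) :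
    (∀ f ∈ K, ∀ g ∈ K, (∀ i ∈ S, f i = g i) → f = g) ↔
      ∀ f ∈ K, (∀ i ∈ S, f i = 0) → f = 0 := by
  constructor
  · exact fun h f hf hfS => h f hf 0 K.zero_mem hfS
  · intro h f hf g hg hfg
    exact sub_eq_zero.mp (h (f - g) (sub_mem hf hg) fun i hi => sub_eq_zero.mpr (hfg i hi))

section Bandwidth

variable {N : ℕ} {lam : Fin N → ℝ} {u : Fin N → Fin N → ℝ}

lemma isGreatest_bandwidth
    (horth : ∀ i j, u i ⬝ᵥ u j = if i = j then (1 : ℝ) else 0) {φ : Fin N → ℝ} (hφ : φ ≠ 0) :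
    IsGreatest {r : ℝ | ∃ i, r = lam i ∧ φ ⬝ᵥ u i ≠ 0} (bandwidth lam u φ) := by
  have hfin : {r : ℝ | ∃ i, r = lam i ∧ φ ⬝ᵥ u i ≠ 0}.Finite :=
    (Set.finite_range lam).subset fun _ ⟨i, hr, _⟩ => ⟨i, hr.symm⟩
  obtain ⟨i, hi⟩ := exists_dotProduct_ne_zero_of_orthonormal horth hφ
  have hne : {r : ℝ | ∃ i, r = lam i ∧ φ ⬝ᵥ u i ≠ 0}.Nonempty := ⟨lam i, i, rfl, hi⟩
  exact ⟨hne.csSup_mem hfin, fun _ hr => le_csSup hfin.bddAbove hr⟩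

lemma bandwidth_mem_range
    (horth : ∀ i j, u i ⬝ᵥ u j = if i = j then (1 : ℝ) else 0) {φ : Fin N → ℝ} (hφ : φ ≠ 0) :
    bandwidth lam u φ ∈ Set.range lam := by
  obtain ⟨i, hi, -⟩ := (isGreatest_bandwidth horth hφ).1
  exact ⟨i, hi.symm⟩

lemma bandwidth_le_iff_mem_PW
    (horth : ∀ i j, u i ⬝ᵥ u j = if i = j then (1 : ℝ) else 0) {φ : Fin N → ℝ} (hφ : φ ≠ 0)
    {ω : ℝ} : bandwidth lam u φ ≤ ω ↔ φ ∈ PW lam u ω := by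
  rw [isLUB_le_iff (isGreatest_bandwidth horth hφ).isLUB, PW,
    mem_span_image_iff_of_orthonormal horth]
  constructor
  · exact fun h i hi => h ⟨i, rfl, hi⟩
  · rintro h _ ⟨i, rfl, hi⟩
    exact h i hi

lemma lt_cutoffFreq_iff
    (horth : ∀ i j, u i ⬝ᵥ u j = if i = j then (1 : ℝ) else 0) {S : Set (Fin N)} {ω : ℝ} :
    (ω : EReal) < cutoffFreq lam u S ↔
      ∀ φ : Fin N → ℝ, φ ≠ 0 → (∀ i ∈ S, φ i = 0) → ω < bandwidth lam u φ := by
  have hfin : {r : EReal | ∃ φ : Fin N → ℝ, φ ≠ 0 ∧ (∀ i ∈ S, φ i = 0) ∧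
      r = (bandwidth lam u φ : EReal)}.Finite := by
    refine ((Set.finite_range lam).image ((↑) : ℝ → EReal)).subset ?_
    rintro _ ⟨φ, hφ, -, rfl⟩
    exact Set.mem_image_of_mem _ (bandwidth_mem_range horth hφ)
  rw [cutoffFreq, lt_sInf_iff_of_finite hfin (EReal.coe_lt_top ω)]
  constructor
  · exact fun h φ hφ hφS => EReal.coe_lt_coe_iff.mp (h _ ⟨φ, hφ, hφS, rfl⟩)
  · rintro h _ ⟨φ, hφ, hφS, rfl⟩
    exact EReal.coe_lt_coe_iff.mpr (h φ hφ hφS)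

theorem sampling_theorem_general
    (horth : ∀ i j, u i ⬝ᵥ u j = if i = j then (1 : ℝ) else 0) (S : Set (Fin N)) (ω : ℝ) :
    (∀ f ∈ PW lam u ω, ∀ g ∈ PW lam u ω, (∀ i ∈ S, f i = g i) → f = g) ↔
      (ω : EReal) < cutoffFreq lam u S := by
  rw [forall_eq_of_eqOn_iff_forall_eq_zero, lt_cutoffFreq_iff horth]
  constructor
  · intro h φ hφ hφS
    by_contra! hle
    exact hφ (h φ ((bandwidth_le_iff_mem_PW horth hφ).mp hle) hφS)
  · intro h φ hφPW hφS
    by_contra hφ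
    exact (h φ hφ hφS).not_ge ((bandwidth_le_iff_mem_PW horth hφ).mpr hφPW)

end Bandwidth

/-- **Sampling theorem.** Every `f ∈ PW_ω(G)` is perfectly recoverable from its samples on `S`
(i.e. the restriction map `f ↦ f(S)` is injective on `PW_ω(G)`) iff `ω < ω_c(S)`. -/
theorem sampling_theorem {N : ℕ}
    (L : Matrix (Fin N) (Fin N) ℝ) (hsymm : L.IsSymm)
    (lam : Fin N → ℝ) (u : Fin N → Fin N → ℝ)
    (hlam_nonneg : ∀ i, 0 ≤ lam i) (hlam_mono : Monotone lam)
    (heig : ∀ i, L *ᵥ u i = lam i • u i)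
    (horth : ∀ i j, u i ⬝ᵥ u j = if i = j then (1 : ℝ) else 0)
    (S : Set (Fin N)) (ω : ℝ) (hω : 0 ≤ ω) :
    (∀ f ∈ PW lam u ω, ∀ g ∈ PW lam u ω, (∀ i ∈ S, f i = g i) → f = g) ↔
      (ω : EReal) < cutoffFreq lam u S := by
  exact sampling_theorem_general horth S ω

end
end

section
/- Let L be a real symmetric positive semidefinite N×N matrix and φ ∈ R^N a nonzero vector. Then the estimated bandwidth ω_k(φ) = (φᵗL^kφ / φᵗφ)^{1/k} is nondecreasing in the positive integer k, i.e., ω_k(φ) ≤ ω_{k+1}(φ) for every k ≥ 1. -/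
open Matrix

noncomputable section

/-!
The moments `m k = ⟪x, T ^ k x⟫` of a positive operator `T` are log-convex: since `T ^ j` is again
positive, the Cauchy–Schwarz inequality for the semi-inner product `⟪T ^ j u, v⟫`, applied to `x`
and `T x`, reads `m (j + 1) ^ 2 ≤ m j * m (j + 2)`. Hence, once normalized by `m 0 = 1`,
`m k ^ (k + 1) ≤ m (k + 1) ^ k`, and it remains to take roots. No spectral decomposition is
involved, so the dimension may be infinite.
-/

theorem pow_succ_le_mul_pow_of_sq_le_mul {R : Type*} [CommSemiring R] [LinearOrder R]
    [IsStrictOrderedRing R] {a : ℕ → R} (ha : ∀ n, 0 ≤ a n)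
    (hconv : ∀ n, a (n + 1) ^ 2 ≤ a n * a (n + 2)) (k : ℕ) :
    a k ^ (k + 1) ≤ a 0 * a (k + 1) ^ k := by
  induction k with
  | zero => simp
  | succ k ih =>
    obtain hzero | hpos := (ha (k + 1)).eq_or_lt
    · rw [← hzero, zero_pow (k + 1).succ_ne_zero]
      exact mul_nonneg (ha 0) (pow_nonneg (ha _) _)
    refine le_of_mul_le_mul_left ?_ (pow_pos hpos k)
    calc a (k + 1) ^ k * a (k + 1) ^ (k + 2)
        = (a (k + 1) ^ 2) ^ (k + 1) := by ring
      _ ≤ (a k * a (k + 2)) ^ (k + 1) := pow_le_pow_left₀ (pow_nonneg (ha _) _) (hconv k) _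
      _ = a k ^ (k + 1) * a (k + 2) ^ (k + 1) := mul_pow _ _ _
      _ ≤ a 0 * a (k + 1) ^ k * a (k + 2) ^ (k + 1) :=
        mul_le_mul_of_nonneg_right ih (pow_nonneg (ha _) _)
      _ = a (k + 1) ^ k * (a 0 * a (k + 2) ^ (k + 1)) := by ring

theorem rpow_inv_natCast_le_rpow_inv_natCast_of_pow_le_pow {a b : ℝ} (ha : 0 ≤ a) (hb : 0 ≤ b)
    {m n : ℕ} (hm : m ≠ 0) (hn : n ≠ 0) (h : a ^ n ≤ b ^ m) :
    a ^ (m⁻¹ : ℝ) ≤ b ^ (n⁻¹ : ℝ) := by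
  refine le_of_pow_le_pow_left₀ (mul_ne_zero hm hn) (Real.rpow_nonneg hb _) ?_
  calc (a ^ (m⁻¹ : ℝ)) ^ (m * n)
      = a ^ n := by rw [pow_mul, Real.rpow_inv_natCast_pow ha hm]
    _ ≤ b ^ m := h
    _ = (b ^ (n⁻¹ : ℝ)) ^ (m * n) := by
      rw [mul_comm, pow_mul, Real.rpow_inv_natCast_pow hb hn]

theorem monotoneOn_rpow_inv_of_sq_le_mul {a : ℕ → ℝ} (ha : ∀ n, 0 ≤ a n) (ha₀ : a 0 ≤ 1)
    (hconv : ∀ n, a (n + 1) ^ 2 ≤ a n * a (n + 2)) :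
    MonotoneOn (fun k : ℕ => a k ^ (k⁻¹ : ℝ)) (Set.Ici 1) := by
  refine monotoneOn_nat_Ici_of_le_succ fun k hk => ?_
  refine rpow_inv_natCast_le_rpow_inv_natCast_of_pow_le_pow (ha k) (ha (k + 1))
    (Nat.one_le_iff_ne_zero.mp hk) k.succ_ne_zero ?_
  exact (pow_succ_le_mul_pow_of_sq_le_mul ha hconv k).trans
    (mul_le_of_le_one_left (pow_nonneg (ha _) _) ha₀)

section PositiveOperator

open RCLike InnerProductSpace

variable {𝕜 E : Type*} [RCLike 𝕜] [NormedAddCommGroup E] [InnerProductSpace 𝕜 E]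
  {T : E →ₗ[𝕜] E}

theorem isPositive_pow (hT : T.IsPositive) (n : ℕ) : (T ^ n).IsPositive := by
  refine ⟨hT.isSymmetric.pow n, ?_⟩
  induction n using Nat.twoStepInduction with
  | zero => exact LinearMap.isPositive_one.re_inner_nonneg_left
  | one => simpa only [pow_one] using hT.re_inner_nonneg_left
  | more n ih _ =>
    intro x
    have hshift : inner 𝕜 ((T ^ (n + 2)) x) x = inner 𝕜 ((T ^ n) (T x)) (T x) := by
      rw [pow_succ', pow_succ, Module.End.mul_apply, Module.End.mul_apply, hT.isSymmetric]
    exact hshift ▸ ih (T x)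

/-- The semi-inner product `(x, y) ↦ ⟪T x, y⟫` of a positive operator `T`, through which the
Cauchy–Schwarz inequality applies to `T`. It is not an instance because it depends on `T`. -/
abbrev positiveOperatorCore (hT : T.IsPositive) : PreInnerProductSpace.Core 𝕜 E where
  inner x y := inner 𝕜 (T x) y
  conj_inner_symm x y := by rw [inner_conj_symm, hT.isSymmetric]
  re_inner_nonneg := hT.re_inner_nonneg_left
  add_left x y z := by rw [map_add, inner_add_left]
  smul_left x y r := by rw [map_smul, inner_smul_left]

theorem norm_inner_map_sq_le (hT : T.IsPositive) (x y : E) :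
    ‖inner 𝕜 (T x) y‖ ^ 2 ≤ re (inner 𝕜 (T x) x) * re (inner 𝕜 (T y) y) := by
  let _ := positiveOperatorCore hT
  have hsymm : ‖inner 𝕜 (T x) y‖ = ‖inner 𝕜 (T y) x‖ := by
    rw [hT.isSymmetric, norm_inner_symm]
  rw [sq]
  nth_rw 2 [hsymm]
  exact InnerProductSpace.Core.inner_mul_inner_self_le (𝕜 := 𝕜) x y

/-- The `k`-th moment `⟪x, T ^ k x⟫ / ⟪x, x⟫` of the operator `T` at the vector `x`; for `k = 1`
it is the Rayleigh quotient. The real part is taken to stay in `ℝ` over complex scalars. -/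
def normalizedMoment (T : E →ₗ[𝕜] E) (x : E) (k : ℕ) : ℝ :=
  re (inner 𝕜 x ((T ^ k) x)) / re (inner 𝕜 x x)

/-- The estimated bandwidth `ω_k(x) = (⟪x, T ^ k x⟫ / ⟪x, x⟫) ^ (1 / k)` of the vector `x` with
respect to the operator `T`. -/
def estimatedBandwidth (T : E →ₗ[𝕜] E) (x : E) (k : ℕ) : ℝ :=
  normalizedMoment T x k ^ (k⁻¹ : ℝ)

theorem normalizedMoment_nonneg (hT : T.IsPositive) (x : E) (k : ℕ) :
    0 ≤ normalizedMoment T x k :=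
  div_nonneg ((isPositive_pow hT k).re_inner_nonneg_right x) inner_self_nonneg

theorem normalizedMoment_zero (T : E →ₗ[𝕜] E) {x : E} (hx : x ≠ 0) :
    normalizedMoment T x 0 = 1 :=
  div_self (re_inner_self_pos.mpr hx).ne'

theorem re_inner_pow_succ_sq_le (hT : T.IsPositive) (x : E) (k : ℕ) :
    re (inner 𝕜 x ((T ^ (k + 1)) x)) ^ 2 ≤
      re (inner 𝕜 x ((T ^ k) x)) * re (inner 𝕜 x ((T ^ (k + 2)) x)) := by
  have hsymm := hT.isSymmetric
  have hmid : inner 𝕜 x ((T ^ (k + 1)) x) = inner 𝕜 ((T ^ k) x) (T x) := by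
    rw [hsymm.pow k, pow_succ, Module.End.mul_apply]
  have hlast : inner 𝕜 x ((T ^ (k + 2)) x) = inner 𝕜 ((T ^ k) (T x)) (T x) := by
    rw [hsymm.pow k, hsymm, pow_succ', pow_succ, Module.End.mul_apply, Module.End.mul_apply]
  rw [hmid, hlast, ← hsymm.pow k x x]
  calc re (inner 𝕜 ((T ^ k) x) (T x)) ^ 2
      ≤ ‖inner 𝕜 ((T ^ k) x) (T x)‖ ^ 2 := sq_le_sq.mpr (by simpa using abs_re_le_norm _)
    _ ≤ _ := norm_inner_map_sq_le (isPositive_pow hT k) x (T x)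

theorem normalizedMoment_succ_sq_le (hT : T.IsPositive) (x : E) (k : ℕ) :
    normalizedMoment T x (k + 1) ^ 2 ≤ normalizedMoment T x k * normalizedMoment T x (k + 2) := by
  simp only [normalizedMoment]
  rw [div_pow, div_mul_div_comm, ← sq]
  exact div_le_div_of_nonneg_right (re_inner_pow_succ_sq_le hT x k) (sq_nonneg _)

theorem estimated_bandwidth_mono_general (hT : T.IsPositive) {x : E} (hx : x ≠ 0) :
    MonotoneOn (estimatedBandwidth T x) (Set.Ici 1) :=
  monotoneOn_rpow_inv_of_sq_le_mul (normalizedMoment_nonneg hT x) (normalizedMoment_zero T hx).le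
    (normalizedMoment_succ_sq_le hT x)

theorem estimatedBandwidth_toEuclideanLin {n : Type*} [Fintype n] [DecidableEq n]
    (A : Matrix n n 𝕜) (v : n → 𝕜) (k : ℕ) :
    estimatedBandwidth A.toEuclideanLin (WithLp.toLp 2 v) k =
      (re (star v ⬝ᵥ (A ^ k) *ᵥ v) / re (star v ⬝ᵥ v)) ^ (1 / (k : ℝ)) := by
  rw [estimatedBandwidth, normalizedMoment, ← toLpLin_pow, toLpLin_toLp,
    EuclideanSpace.inner_toLp_toLp, EuclideanSpace.inner_toLp_toLp, dotProduct_comm,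
    dotProduct_comm v, toLin'_apply, one_div]

end PositiveOperator

/-- **Monotonicity of the estimated bandwidth in `k`.** For a real symmetric positive
semidefinite matrix `L` and a nonzero vector `φ`, the estimated bandwidth
`ω_k(φ) = (φᵗ L^k φ / φᵗ φ)^{1/k}` is nondecreasing in the positive integer `k`. -/
theorem estimated_bandwidth_mono {N : ℕ}
    (L : Matrix (Fin N) (Fin N) ℝ) (hL : L.PosSemidef)
    (φ : Fin N → ℝ) (hφ : φ ≠ 0) (k : ℕ) (hk : 1 ≤ k) :
    ((φ ⬝ᵥ (L ^ k) *ᵥ φ) / (φ ⬝ᵥ φ)) ^ ((1 : ℝ) / k) ≤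
      ((φ ⬝ᵥ (L ^ (k + 1)) *ᵥ φ) / (φ ⬝ᵥ φ)) ^ ((1 : ℝ) / (k + 1)) := by
  have hφ' : WithLp.toLp 2 φ ≠ 0 := (WithLp.toLp_eq_zero 2).not.mpr hφ
  simpa only [estimatedBandwidth_toEuclideanLin, star_trivial, RCLike.re_to_real, Nat.cast_succ]
    using estimated_bandwidth_mono_general (isPositive_toEuclideanLin_iff.mpr hL) hφ'
      hk k.succ_pos k.le_succ

end
end

section
/- Let M be a real symmetric N×N matrix and S ⊊ V with S^c nonempty. Then as α → ∞, the smallest eigenvalue of M + α·diag(1_S) converges to the smallest eigenvalue of the principal submatrix M_{S^c}; i.e., the penalized unconstrained eigenvalue problem recovers the constrained (Dirichlet) one in the limit. -/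
open Matrix Filter Topology

noncomputable section

/-- The smallest eigenvalue of a matrix, as the infimum of its set of (real) eigenvalues. -/
def smallestEigenvalue {n : Type*} [Fintype n] (A : Matrix n n ℝ) : ℝ :=
  sInf {t : ℝ | ∃ v : n → ℝ, v ≠ 0 ∧ A *ᵥ v = t • v}

/-!
For a symmetric matrix `A`, the inequality `c ≤ λ_min(A)` says that `A - c` is positive
semidefinite. Ordering `V` as `Sᶜ ⊕ S` turns `M + α • diag(1_S)` into a block matrix
`[A, B; Bᵀ, C + α]` with `A = M_{Sᶜ}`. Its smallest eigenvalue is at most `λ_min(A)` because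
positive semidefiniteness passes to principal submatrices. Conversely, if `c < λ_min(A)` then
`A - c` is positive definite, so the block matrix minus `c` is positive semidefinite as soon as its
Schur complement `(C - c - Bᵀ (A - c)⁻¹ B) + α` is, which holds for all large `α`.
-/

section SmallestEigenvalue

variable {m n : Type*} [Fintype n] {A : Matrix n n ℝ} {c : ℝ}

theorem smallestEigenvalue_eq_sInf_spectrum [DecidableEq n] (A : Matrix n n ℝ) :
    smallestEigenvalue A = sInf (spectrum ℝ A) := by
  refine congrArg sInf (Set.ext fun t => ?_)
  rw [← spectrum_toLin', ← Module.End.hasEigenvalue_iff_mem_spectrum]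
  simp [Module.End.hasEigenvalue_iff, Submodule.ne_bot_iff, and_comm]

theorem smallestEigenvalue_submatrix_equiv [Fintype m] (A : Matrix n n ℝ) (e : m ≃ n) :
    smallestEigenvalue (A.submatrix e e) = smallestEigenvalue A := by
  classical
  simp only [smallestEigenvalue_eq_sInf_spectrum]
  exact congrArg sInf (AlgEquiv.spectrum_eq (reindexAlgEquiv ℝ ℝ e.symm) A)

theorem posSemidef_sub_smul_one_iff_forall_spectrum [DecidableEq n] (hA : A.IsHermitian) :
    (A - c • 1).PosSemidef ↔ ∀ t ∈ spectrum ℝ A, c ≤ t := by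
  have hAc : (A - c • 1).IsHermitian := hA.sub (isHermitian_one.smul (.all c))
  rw [posSemidef_iff_isHermitian_and_spectrum_nonneg, and_iff_right hAc,
    ← Algebra.algebraMap_eq_smul_one, ← spectrum.sub_singleton_eq]
  simp [Set.subset_def]

theorem posSemidef_sub_smul_one_of_le_smallestEigenvalue [DecidableEq n] (hA : A.IsHermitian)
    (hc : c ≤ smallestEigenvalue A) : (A - c • 1).PosSemidef := by
  rw [smallestEigenvalue_eq_sInf_spectrum] at hc
  exact (posSemidef_sub_smul_one_iff_forall_spectrum hA).mpr fun t ht =>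
    hc.trans (csInf_le finite_real_spectrum.bddBelow ht)

theorem le_smallestEigenvalue_iff_posSemidef [DecidableEq n] [Nonempty n] (hA : A.IsHermitian) :
    c ≤ smallestEigenvalue A ↔ (A - c • 1).PosSemidef := by
  refine ⟨posSemidef_sub_smul_one_of_le_smallestEigenvalue hA, fun h => ?_⟩
  have hne : (spectrum ℝ A).Nonempty :=
    ⟨_, hA.eigenvalues_mem_spectrum_real (Classical.arbitrary n)⟩
  rw [smallestEigenvalue_eq_sInf_spectrum]
  exact le_csInf hne ((posSemidef_sub_smul_one_iff_forall_spectrum hA).mp h)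

theorem posDef_sub_smul_one_of_lt_smallestEigenvalue [DecidableEq n] (hA : A.IsHermitian)
    (hc : c < smallestEigenvalue A) : (A - c • 1).PosDef := by
  have hpos : (A - smallestEigenvalue A • 1).PosSemidef :=
    posSemidef_sub_smul_one_of_le_smallestEigenvalue hA le_rfl
  have hgap : ((smallestEigenvalue A - c) • (1 : Matrix n n ℝ)).PosDef :=
    PosDef.one.smul (sub_pos.mpr hc)
  simpa [sub_smul] using PosDef.posSemidef_add hpos hgap

theorem smallestEigenvalue_le_submatrix [Fintype m] [Nonempty m] (hA : A.IsHermitian) {e : m → n}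
    (he : Function.Injective e) :
    smallestEigenvalue A ≤ smallestEigenvalue (A.submatrix e e) := by
  classical
  rw [le_smallestEigenvalue_iff_posSemidef (hA.submatrix e), ← submatrix_one e he]
  exact (posSemidef_sub_smul_one_of_le_smallestEigenvalue hA le_rfl).submatrix e

end SmallestEigenvalue

theorem eventually_posSemidef_add_smul_one {n : Type*} [Finite n] [DecidableEq n]
    {A : Matrix n n ℝ} (hA : A.IsHermitian) :
    ∀ᶠ α : ℝ in atTop, (A + α • 1).PosSemidef := by
  have := Fintype.ofFinite n
  filter_upwards [eventually_ge_atTop (-smallestEigenvalue A)] with α hα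
  simpa using posSemidef_sub_smul_one_of_le_smallestEigenvalue hA (neg_le.mp hα)

section Blocks

variable {m n : Type*} [DecidableEq n]

theorem fromBlocks_sub_smul_one {R : Type*} [Ring R] [DecidableEq m] (A : Matrix m m R)
    (B : Matrix m n R) (C : Matrix n m R) (D : Matrix n n R) (c : R) :
    fromBlocks A B C D - c • 1 = fromBlocks (A - c • 1) B C (D - c • 1) := by
  rw [← fromBlocks_one, fromBlocks_smul, sub_eq_add_neg, fromBlocks_neg, fromBlocks_add]
  simp [sub_eq_add_neg]

variable [Fintype m] [Nonempty m] [Fintype n] {A : Matrix m m ℝ} {C : Matrix n n ℝ} {c : ℝ}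

theorem eventually_le_smallestEigenvalue_fromBlocks (hA : A.IsHermitian) (B : Matrix m n ℝ)
    (hC : C.IsHermitian) (hc : c < smallestEigenvalue A) :
    ∀ᶠ α : ℝ in atTop, c ≤ smallestEigenvalue (fromBlocks A B Bᴴ (C + α • 1)) := by
  classical
  have hAc : (A - c • 1).PosDef := posDef_sub_smul_one_of_lt_smallestEigenvalue hA hc
  have : Invertible (A - c • 1) := hAc.isUnit.invertible
  have hschur : (C - c • 1 - Bᴴ * (A - c • 1)⁻¹ * B).IsHermitian :=
    (hC.sub (isHermitian_one.smul (.all c))).sub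
      (isHermitian_conjTranspose_mul_mul B hAc.isHermitian.inv)
  filter_upwards [eventually_posSemidef_add_smul_one hschur] with α hα
  have hblock : (fromBlocks A B Bᴴ (C + α • 1)).IsHermitian :=
    hA.fromBlocks rfl (hC.add (isHermitian_one.smul (.all α)))
  rw [le_smallestEigenvalue_iff_posSemidef hblock, fromBlocks_sub_smul_one, hAc.fromBlocks₁₁]
  simpa only [sub_add_eq_add_sub] using hα

theorem tendsto_smallestEigenvalue_fromBlocks (hA : A.IsHermitian) (B : Matrix m n ℝ)
    (hC : C.IsHermitian) :
    Tendsto (fun α : ℝ => smallestEigenvalue (fromBlocks A B Bᴴ (C + α • 1))) atTop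
      (𝓝 (smallestEigenvalue A)) := by
  refine tendsto_order.mpr ⟨fun a ha => ?_, fun a ha => .of_forall fun α => ?_⟩
  · obtain ⟨c, hac, hcA⟩ := exists_between ha
    exact (eventually_le_smallestEigenvalue_fromBlocks hA B hC hcA).mono fun _ => hac.trans_le
  · have hblock : (fromBlocks A B Bᴴ (C + α • 1)).IsHermitian :=
      hA.fromBlocks rfl (hC.add (isHermitian_one.smul (.all α)))
    exact (smallestEigenvalue_le_submatrix hblock Sum.inl_injective).trans_lt ha

end Blocks

theorem add_smul_diagonal_submatrix_sumCompl {n R : Type*} [DecidableEq n] [Fintype n] [Semiring R]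
    [StarRing R] {M : Matrix n n R} (hM : M.IsHermitian) (S : Finset n) (α : R) :
    (M + α • diagonal fun i => if i ∈ S then 1 else 0).submatrix
        (Equiv.sumCompl (· ∈ Sᶜ)) (Equiv.sumCompl (· ∈ Sᶜ)) =
      fromBlocks (M.toBlock (· ∈ Sᶜ) (· ∈ Sᶜ)) (M.toBlock (· ∈ Sᶜ) (· ∉ Sᶜ))
        (M.toBlock (· ∈ Sᶜ) (· ∉ Sᶜ))ᴴ (M.toBlock (· ∉ Sᶜ) (· ∉ Sᶜ) + α • 1) := by
  ext (i | i) (j | j)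
  · simp [diagonal_apply, Finset.mem_compl.mp i.2]
  · simp [diagonal_apply, Finset.mem_compl.mp i.2]
  · have hij : (i : n) ≠ j := fun h => i.2 (h ▸ j.2)
    simp [hij, hM.apply]
  · have hi : (i : n) ∈ S := Finset.notMem_compl.mp i.2
    simp [diagonal_apply, one_apply, Subtype.ext_iff, hi]

theorem penalized_eigenvalue_tendsto_general {n : Type*} [Fintype n] [DecidableEq n]
    {M : Matrix n n ℝ} (hM : M.IsSymm) {S : Finset n} (hS : (Sᶜ : Finset n).Nonempty) :
    Tendsto
      (fun α : ℝ =>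
        smallestEigenvalue (M + α • diagonal (fun i => if i ∈ S then (1 : ℝ) else 0)))
      atTop
      (𝓝 (smallestEigenvalue
        (M.submatrix (Subtype.val : {i // i ∈ Sᶜ} → n) Subtype.val))) := by
  have : Nonempty {i // i ∈ Sᶜ} := hS.to_subtype
  have hMh : M.IsHermitian := isHermitian_iff_isSymm.mpr hM
  have hA : (M.toBlock (· ∈ Sᶜ) (· ∈ Sᶜ)).IsHermitian := hMh.submatrix Subtype.val
  have hC : (M.toBlock (· ∉ Sᶜ) (· ∉ Sᶜ)).IsHermitian := hMh.submatrix Subtype.val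
  refine (tendsto_smallestEigenvalue_fromBlocks hA (M.toBlock _ _) hC).congr fun α => ?_
  rw [← smallestEigenvalue_submatrix_equiv _ (Equiv.sumCompl (· ∈ Sᶜ)),
    add_smul_diagonal_submatrix_sumCompl hMh]

/-- **The penalized eigenvalue problem recovers the Dirichlet one in the limit.** For a real
symmetric matrix `M` and `S ⊊ V` with nonempty complement, as `α → ∞` the smallest eigenvalue of
`M + α·diag(1_S)` converges to the smallest eigenvalue of the principal submatrix `M_{Sᶜ}`. -/
theorem penalized_eigenvalue_tendsto {N : ℕ}
    (M : Matrix (Fin N) (Fin N) ℝ) (hM : M.IsSymm)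
    (S : Finset (Fin N)) (hS : (Sᶜ : Finset (Fin N)).Nonempty) :
    Tendsto
      (fun α : ℝ =>
        smallestEigenvalue (M + α • Matrix.diagonal (fun i => if i ∈ S then (1 : ℝ) else 0)))
      atTop
      (𝓝 (smallestEigenvalue
        (M.submatrix (Subtype.val : {i // i ∈ Sᶜ} → Fin N) Subtype.val))) := by
  exact penalized_eigenvalue_tendsto_general hM hS

end
end

section
/- Let S ⊆ V, ω ≥ 0 with ω < ω_c(S) = inf{ω(φ) : φ ∈ L2(S^c), φ ≠ 0}, and f ∈ PW_ω(G). Define C_1 = {x ∈ R^N : x(i) = f(i) for all i ∈ S} and C_2 = PW_ω(G). Then C_1 ∩ C_2 = {f}; i.e., f is the unique ω-bandlimited signal consistent with the given samples on S. -/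
open Matrix

noncomputable section

/-! The difference of two `ω`-bandlimited signals with the same samples on `S` lies in `PW_ω(G)` and
vanishes on `S`. Frequencies above `ω` are absent from it, so if it were nonzero, its bandwidth
would be at most `ω` by the first property and at least `ω_c(S) > ω` by the second. -/

/-- The space `L₂(Sᶜ)` of signals vanishing on `S`. Signals take values in an arbitrary module
`M`; the space `L₂(Sᶜ)` of real signals is `vanishingOn ℝ ℝ S`. -/
def vanishingOn {ι : Type*} (R M : Type*) [Semiring R] [AddCommMonoid M] [Module R M]
    (S : Set ι) : Submodule R (ι → M) :=
  Submodule.pi S fun _ => ⊥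

theorem mem_vanishingOn {ι R M : Type*} [Semiring R] [AddCommMonoid M] [Module R M]
    {S : Set ι} {φ : ι → M} : φ ∈ vanishingOn R M S ↔ ∀ i ∈ S, φ i = 0 :=
  Iff.rfl

theorem setOf_agree_inter_eq_singleton {ι R M : Type*} [Ring R] [AddCommGroup M] [Module R M]
    {W : Submodule R (ι → M)} {S : Set ι} (hWS : Disjoint W (vanishingOn R M S))
    {f : ι → M} (hf : f ∈ W) :
    {x : ι → M | ∀ i ∈ S, x i = f i} ∩ (W : Set (ι → M)) = {f} := by
  refine Set.Subset.antisymm ?_ (Set.singleton_subset_iff.2 ⟨fun _ _ => rfl, hf⟩)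
  rintro x ⟨hxS, hx⟩
  have hvanish : x - f ∈ vanishingOn R M S :=
    mem_vanishingOn.2 fun i hi => sub_eq_zero.2 (hxS i hi)
  exact sub_eq_zero.1 (Submodule.disjoint_def.1 hWS _ (W.sub_mem hx hf) hvanish)

theorem dotProduct_eq_zero_of_mem_span {n R : Type*} [Fintype n] [Semiring R]
    {s : Set (n → R)} {v w : n → R} (hs : ∀ x ∈ s, x ⬝ᵥ w = 0)
    (hv : v ∈ Submodule.span R s) : v ⬝ᵥ w = 0 := by
  induction hv using Submodule.span_induction with
  | mem x hx => exact hs x hx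
  | zero => exact zero_dotProduct w
  | add x y _ _ hx hy => rw [add_dotProduct, hx, hy, add_zero]
  | smul a x _ hx => rw [smul_dotProduct, hx, smul_zero]

theorem exists_dotProduct_ne_zero_of_mem_span {n R : Type*} [Fintype n] [Ring R] [LinearOrder R]
    [IsStrictOrderedRing R] {s : Set (n → R)} {v : n → R} (hv : v ∈ Submodule.span R s)
    (hv0 : v ≠ 0) : ∃ x ∈ s, x ⬝ᵥ v ≠ 0 := by
  by_contra! hs
  exact hv0 (dotProduct_self_eq_zero.1 (dotProduct_eq_zero_of_mem_span hs hv))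

section PaleyWiener

variable {N : ℕ} {lam : Fin N → ℝ} {u : Fin N → Fin N → ℝ} {S : Set (Fin N)} {ω : ℝ}
  {φ : Fin N → ℝ}

theorem cutoffFreq_le_bandwidth (hφS : φ ∈ vanishingOn ℝ ℝ S) (hφ0 : φ ≠ 0) :
    cutoffFreq lam u S ≤ (bandwidth lam u φ : EReal) :=
  sInf_le ⟨φ, hφ0, mem_vanishingOn.1 hφS, rfl⟩

theorem dotProduct_eq_zero_of_mem_PW (hu : ∀ i j, lam i ≠ lam j → u i ⬝ᵥ u j = 0)
    (hφ : φ ∈ PW lam u ω) {i : Fin N} (hi : ω < lam i) : φ ⬝ᵥ u i = 0 := by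
  refine dotProduct_eq_zero_of_mem_span ?_ hφ
  rintro _ ⟨j, hj, rfl⟩
  exact hu j i (hj.trans_lt hi).ne

theorem exists_dotProduct_ne_zero_of_mem_PW (hφ : φ ∈ PW lam u ω) (hφ0 : φ ≠ 0) :
    ∃ i, φ ⬝ᵥ u i ≠ 0 := by
  obtain ⟨_, ⟨i, -, rfl⟩, hi⟩ := exists_dotProduct_ne_zero_of_mem_span hφ hφ0
  exact ⟨i, dotProduct_comm φ (u i) ▸ hi⟩

theorem bandwidth_le_of_mem_PW (hu : ∀ i j, lam i ≠ lam j → u i ⬝ᵥ u j = 0)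
    (hφ : φ ∈ PW lam u ω) (hφ0 : φ ≠ 0) : bandwidth lam u φ ≤ ω := by
  -- Some frequency is present in `φ`, so the supremum is not the junk value `sSup ∅ = 0`,
  -- which would exceed a negative `ω`.
  obtain ⟨i, hi⟩ := exists_dotProduct_ne_zero_of_mem_PW hφ hφ0
  refine csSup_le ⟨lam i, i, rfl, hi⟩ ?_
  rintro _ ⟨j, rfl, hj⟩
  exact le_of_not_gt fun hωj => hj (dotProduct_eq_zero_of_mem_PW hu hφ hωj)

theorem disjoint_PW_vanishingOn (hu : ∀ i j, lam i ≠ lam j → u i ⬝ᵥ u j = 0)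
    (hcut : (ω : EReal) < cutoffFreq lam u S) :
    Disjoint (PW lam u ω) (vanishingOn ℝ ℝ S) := by
  refine Submodule.disjoint_def.2 fun φ hφ hφS => ?_
  by_contra hφ0
  have hωlt : ω < bandwidth lam u φ :=
    EReal.coe_lt_coe_iff.1 (hcut.trans_le (cutoffFreq_le_bandwidth hφS hφ0))
  exact hωlt.not_ge (bandwidth_le_of_mem_PW hu hφ hφ0)

end PaleyWiener

theorem bandlimited_consistent_unique_general {N : ℕ}
    (lam : Fin N → ℝ) (u : Fin N → Fin N → ℝ)
    (hu : ∀ i j, lam i ≠ lam j → u i ⬝ᵥ u j = 0)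
    (S : Set (Fin N)) (ω : ℝ) (hcut : (ω : EReal) < cutoffFreq lam u S)
    (f : Fin N → ℝ) (hf : f ∈ PW lam u ω) :
    {x : Fin N → ℝ | ∀ i ∈ S, x i = f i} ∩ (PW lam u ω : Set (Fin N → ℝ)) = {f} :=
  setOf_agree_inter_eq_singleton (disjoint_PW_vanishingOn hu hcut) hf

/-- **Uniqueness of the bandlimited signal consistent with the samples.** If `ω < ω_c(S)` and
`f ∈ PW_ω(G)`, then the set of signals agreeing with `f` on `S` (the set `C₁`) intersects
`PW_ω(G)` (the set `C₂`) exactly in `{f}`. -/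
theorem bandlimited_consistent_unique {N : ℕ}
    (L : Matrix (Fin N) (Fin N) ℝ) (hsymm : L.IsSymm)
    (lam : Fin N → ℝ) (u : Fin N → Fin N → ℝ)
    (hlam_nonneg : ∀ i, 0 ≤ lam i) (hlam_mono : Monotone lam)
    (heig : ∀ i, L *ᵥ u i = lam i • u i)
    (horth : ∀ i j, u i ⬝ᵥ u j = if i = j then (1 : ℝ) else 0)
    (S : Set (Fin N)) (ω : ℝ) (hω : 0 ≤ ω)
    (hcut : (ω : EReal) < cutoffFreq lam u S)
    (f : Fin N → ℝ) (hf : f ∈ PW lam u ω) :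
    {x : Fin N → ℝ | ∀ i ∈ S, x i = f i} ∩ (PW lam u ω : Set (Fin N → ℝ)) = {f} :=
  bandlimited_consistent_unique_general lam u
    (fun i j hij => (horth i j).trans (if_neg (ne_of_apply_ne lam hij))) S ω hcut f hf

end
end
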